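/- Let A, B : {0, …, U−1} → ℕ be nonnegative integer vectors, let p be a prime with 1 ≤ m ≤ p, fix σ, τ ∈ {0, …, p−1}, and let h(x) = ((σx + τ) mod p) mod m. Let V = h(A) ⋆_m h(B) and W = h(∂A) ⋆_m h(B) + h(A) ⋆_m h(∂B). Suppose x ∈ supp(A ⋆ B) is isolated, meaning there is no x′ ∈ supp(A ⋆ B) with x′ ≠ x such that h(x′) ≡ h(x) + o (mod m) for some o ∈ {−2p, −p, 0, p, 2p}. Then Σ_{i ∈ S} V_i = (A ⋆ B)_x, where S = { (h(0) + h(x) + o) mod m : o ∈ {−p, 0, p} } (a set, so each residue is counted once), and moreover W_i = x · V_i for every i ∈ S. -/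

import Mathlib

/-- The hashed vector `f(D)` of length `m` for the linear hash function
`f(i) = ((σi + τ) mod p) mod m`: `f(D)_j = ∑_{i : f(i) = j} D_i` (the vector `D` is
supported on `[U]`). -/
def hashVec (p m U σ τ : ℕ) (D : ℕ → ℕ) (j : ℕ) : ℕ :=
  ∑ i ∈ (Finset.range U).filter (fun i => ((σ * i + τ) % p) % m = j), D i

/-- The cyclic convolution of two length-`m` vectors: `(P ⋆_m Q)_i = ∑_{j<m} P_j Q_{(i−j) mod m}`. -/
def cyclicConv (m : ℕ) (P Q : ℕ → ℕ) (i : ℕ) : ℕ :=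
  ∑ j ∈ Finset.range m, P j * Q ((i + m - j) % m)

lemma hash_key (p m σ τ y z : ℕ) (hp : 0 < p) :
    ∃ o ∈ ({-(p : ℤ), 0, (p : ℤ)} : Finset ℤ),
      ((((σ * y + τ) % p) % m : ℕ) : ℤ) + ((((σ * z + τ) % p) % m : ℕ) : ℤ)
        ≡ ((((σ * 0 + τ) % p) % m : ℕ) : ℤ) + ((((σ * (y + z) + τ) % p) % m : ℕ) : ℤ) + o
          [ZMOD (m : ℤ)] := by
  have hmod : ((σ * y + τ) % p + (σ * z + τ) % p) ≡
      ((σ * 0 + τ) % p + (σ * (y + z) + τ) % p) [MOD p] := by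
    have e : (σ * y + τ) + (σ * z + τ) = (σ * 0 + τ) + (σ * (y + z) + τ) := by ring
    have h1 := (Nat.mod_modEq (σ * y + τ) p).add (Nat.mod_modEq (σ * z + τ) p)
    have h2 := (Nat.mod_modEq (σ * 0 + τ) p).add (Nat.mod_modEq (σ * (y + z) + τ) p)
    rw [e] at h1
    exact h1.trans h2.symm
  have l1 := Nat.mod_lt (σ * y + τ) hp
  have l2 := Nat.mod_lt (σ * z + τ) hp
  have l3 := Nat.mod_lt (σ * 0 + τ) hp
  have l4 := Nat.mod_lt (σ * (y + z) + τ) hp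
  generalize (σ * y + τ) % p = a at *
  generalize (σ * z + τ) % p = b at *
  generalize (σ * 0 + τ) % p = c at *
  generalize (σ * (y + z) + τ) % p = d at *
  obtain ⟨k, hk⟩ := (Nat.modEq_iff_dvd.mp hmod)
  push_cast at hk
  have hp' : (0 : ℤ) < p := by exact_mod_cast hp
  have k1 : k < 2 := by nlinarith
  have k2 : -2 < k := by nlinarith
  have hab : (a : ℤ) + b = c + d + (-(p * k)) := by linarith
  refine ⟨-(p * k), ?_, ?_⟩
  · have : k = -1 ∨ k = 0 ∨ k = 1 := by omega
    rcases this with rfl | rfl | rfl <;> simp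
  · push_cast
    have h1 : (a : ℤ) % m + b % m ≡ a + b [ZMOD m] := (Int.mod_modEq _ _).add (Int.mod_modEq _ _)
    have h2 : (c : ℤ) % m + d % m + (-(p * k)) ≡ c + d + (-(p * k)) [ZMOD m] :=
      ((Int.mod_modEq _ _).add (Int.mod_modEq _ _)).add_right _
    rw [hab] at h1
    exact h1.trans h2.symm

lemma conv_expand (p m U σ τ : ℕ) (hm : 1 ≤ m) (D E : ℕ → ℕ) (i : ℕ) (hi : i < m) :
    cyclicConv m (hashVec p m U σ τ D) (hashVec p m U σ τ E) i
      = ∑ y ∈ Finset.range U, ∑ z ∈ Finset.range U,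
        if (((σ * y + τ) % p) % m + ((σ * z + τ) % p) % m) % m = i then D y * E z else 0 := by
  unfold cyclicConv hashVec
  simp_rw [Finset.sum_filter, Finset.sum_mul]
  rw [Finset.sum_comm]
  refine Finset.sum_congr rfl fun y _ => ?_
  have hy : ((σ * y + τ) % p) % m < m := Nat.mod_lt _ hm
  simp_rw [ite_mul, zero_mul]
  rw [Finset.sum_ite_eq, if_pos (Finset.mem_range.mpr hy), Finset.mul_sum]
  refine Finset.sum_congr rfl fun z _ => ?_
  have hz : ((σ * z + τ) % p) % m < m := Nat.mod_lt _ hm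
  generalize ((σ * y + τ) % p) % m = a at *
  generalize ((σ * z + τ) % p) % m = b at *
  rw [mul_ite, mul_zero]
  congr 1
  apply propext
  have e1 : (i + m - a) % m = if a ≤ i then i - a else i + m - a := by
    split_ifs with h
    · rw [show i + m - a = (i - a) + m by omega, Nat.add_mod_right, Nat.mod_eq_of_lt (by omega)]
    · exact Nat.mod_eq_of_lt (by omega)
  have e2 : (a + b) % m = if a + b < m then a + b else a + b - m := by
    split_ifs with h
    · exact Nat.mod_eq_of_lt h
    · rw [Nat.mod_eq_sub_mod (by omega), Nat.mod_eq_of_lt (by omega)]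
  rw [e1, e2]
  split_ifs <;> omega

/-- Isolated indices are recovered. Let `A, B` be nonnegative vectors
supported on `[U]`, `p` a prime, `1 ≤ m ≤ p`, `σ, τ ∈ [p]` fixed, and
`h(v) = ((σv + τ) mod p) mod m`. Let `V = h(A) ⋆_m h(B)` and
`W = h(∂A) ⋆_m h(B) + h(A) ⋆_m h(∂B)`. If `x ∈ supp(A ⋆ B)` is isolated — no other
`x′ ∈ supp(A ⋆ B)` has `h(x′) ≡ h(x) + o (mod m)` for some `o ∈ {−2p, −p, 0, p, 2p}` —
then `∑_{i ∈ S} V_i = (A ⋆ B)_x` where `S = {(h(0) + h(x) + o) mod m : o ∈ {−p, 0, p}}`,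
and `W_i = x · V_i` for every `i ∈ S`. -/
theorem stmt_19 (U p m σ τ : ℕ) (hp : p.Prime) (hm : 1 ≤ m) (hmp : m ≤ p)
    (hσ : σ < p) (hτ : τ < p) (A B : ℕ → ℕ)
    (hA : ∀ i, U ≤ i → A i = 0) (hB : ∀ i, U ≤ i → B i = 0)
    (x : ℕ)
    (hx : (∑ q ∈ Finset.HasAntidiagonal.antidiagonal x, A q.1 * B q.2) ≠ 0)
    (hiso : ∀ x' : ℕ, (∑ q ∈ Finset.HasAntidiagonal.antidiagonal x', A q.1 * B q.2) ≠ 0 → x' ≠ x →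
      ∀ o ∈ ({-2 * (p : ℤ), -(p : ℤ), 0, (p : ℤ), 2 * (p : ℤ)} : Finset ℤ),
        ¬ (((((σ * x' + τ) % p) % m : ℕ) : ℤ)
            ≡ ((((σ * x + τ) % p) % m : ℕ) : ℤ) + o [ZMOD (m : ℤ)])) :
    (∑ i ∈ (({-(p : ℤ), 0, (p : ℤ)} : Finset ℤ).image (fun o =>
        (((((σ * 0 + τ) % p) % m : ℕ) + ((((σ * x + τ) % p) % m : ℕ) : ℤ) + o)
          % (m : ℤ)).toNat)),
      cyclicConv m (hashVec p m U σ τ A) (hashVec p m U σ τ B) i)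
      = (∑ q ∈ Finset.HasAntidiagonal.antidiagonal x, A q.1 * B q.2)
    ∧ ∀ i ∈ (({-(p : ℤ), 0, (p : ℤ)} : Finset ℤ).image (fun o =>
        (((((σ * 0 + τ) % p) % m : ℕ) + ((((σ * x + τ) % p) % m : ℕ) : ℤ) + o)
          % (m : ℤ)).toNat)),
        cyclicConv m (hashVec p m U σ τ (fun t => t * A t)) (hashVec p m U σ τ B) i
          + cyclicConv m (hashVec p m U σ τ A) (hashVec p m U σ τ (fun t => t * B t)) i
        = x * cyclicConv m (hashVec p m U σ τ A) (hashVec p m U σ τ B) i := by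
  have hmz : (0 : ℤ) < m := by exact_mod_cast hm
  set S := (({-(p : ℤ), 0, (p : ℤ)} : Finset ℤ).image (fun o =>
        (((((σ * 0 + τ) % p) % m : ℕ) + ((((σ * x + τ) % p) % m : ℕ) : ℤ) + o)
          % (m : ℤ)).toNat)) with hS
  have hlt : ∀ i ∈ S, i < m := by
    intro i hi
    obtain ⟨o, _, rfl⟩ := Finset.mem_image.mp hi
    have := Int.emod_lt_of_pos ((((σ * 0 + τ) % p) % m : ℕ)
      + ((((σ * x + τ) % p) % m : ℕ) : ℤ) + o) hmz
    omega
  have key2 : ∀ y z, y + z = x →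
      (((σ * y + τ) % p) % m + ((σ * z + τ) % p) % m) % m ∈ S := by
    intro y z h
    obtain ⟨o, ho, hc⟩ := hash_key p m σ τ y z hp.pos
    rw [h] at hc
    refine Finset.mem_image.mpr ⟨o, ho, ?_⟩
    have hc' := hc.symm
    unfold Int.ModEq at hc'
    simp only [hc']
    norm_cast
  have key1 : ∀ y z, A y * B z ≠ 0 →
      (((σ * y + τ) % p) % m + ((σ * z + τ) % p) % m) % m ∈ S → y + z = x := by
    intro y z h0 hmem
    by_contra hne
    obtain ⟨o, ho, hc⟩ := hash_key p m σ τ y z hp.pos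
    obtain ⟨o', ho', hc'⟩ := Finset.mem_image.mp hmem
    have hsupp : (∑ q ∈ Finset.HasAntidiagonal.antidiagonal (y + z), A q.1 * B q.2) ≠ 0 := by
      intro h
      exact h0 (Finset.sum_eq_zero_iff.mp h (y, z) (Finset.HasAntidiagonal.mem_antidiagonal.mpr rfl))
    have hmem2 : o' - o ∈
        ({-2 * (p : ℤ), -(p : ℤ), 0, (p : ℤ), 2 * (p : ℤ)} : Finset ℤ) := by
      simp only [Finset.mem_insert, Finset.mem_singleton] at ho ho' ⊢
      omega
    refine hiso (y + z) hsupp hne (o' - o) hmem2 ?_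
    have hn := Int.emod_nonneg ((((σ * 0 + τ) % p) % m : ℕ)
      + ((((σ * x + τ) % p) % m : ℕ) : ℤ) + o') hmz.ne'
    have hc2 := congrArg (Nat.cast : ℕ → ℤ) hc'
    simp only [Int.toNat_of_nonneg hn] at hc2
    rw [Int.natCast_mod (_ + _) m, Nat.cast_add] at hc2
    have h3 := hc.symm.trans (Int.ModEq.symm hc2)
    have h4 := h3.sub_right (((((σ * 0 + τ) % p) % m : ℕ) : ℤ) + o)
    ring_nf at h4 ⊢
    exact h4
  constructor
  · rw [Finset.sum_congr rfl fun i hi => conv_expand p m U σ τ hm A B i (hlt i hi)]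
    rw [Finset.sum_comm]
    have e : ∀ y ∈ Finset.range U, ∑ i ∈ S, (∑ z ∈ Finset.range U,
        if (((σ * y + τ) % p) % m + ((σ * z + τ) % p) % m) % m = i then A y * B z else 0)
        = ∑ z ∈ Finset.range U, if y + z = x then A y * B z else 0 := by
      intro y _
      rw [Finset.sum_comm]
      refine Finset.sum_congr rfl fun z _ => ?_
      rw [Finset.sum_ite_eq]
      by_cases h0 : A y * B z = 0
      · simp [h0]
      · congr 1
        exact propext ⟨key1 y z h0, key2 y z⟩
    rw [Finset.sum_congr rfl e, ← Finset.sum_product', ← Finset.sum_filter]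
    refine Finset.sum_subset (fun q hq => ?_) (fun q hq hq' => ?_)
    · exact Finset.HasAntidiagonal.mem_antidiagonal.mpr (Finset.mem_filter.mp hq).2
    · rw [Finset.HasAntidiagonal.mem_antidiagonal] at hq
      simp only [Finset.mem_filter, Finset.mem_product, Finset.mem_range, hq, and_true,
        not_and_or, not_lt] at hq'
      rcases hq' with h | h
      · rw [hA _ h, zero_mul]
      · rw [hB _ h, mul_zero]
  · intro i hi
    have hil := hlt i hi
    rw [conv_expand p m U σ τ hm _ _ i hil, conv_expand p m U σ τ hm _ _ i hil,
      conv_expand p m U σ τ hm _ _ i hil, Finset.mul_sum, ← Finset.sum_add_distrib]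
    refine Finset.sum_congr rfl fun y _ => ?_
    rw [Finset.mul_sum, ← Finset.sum_add_distrib]
    refine Finset.sum_congr rfl fun z _ => ?_
    split_ifs with h
    · by_cases h0 : A y * B z = 0
      · rw [h0, mul_assoc, h0, mul_left_comm, h0]; simp
      · rw [← key1 y z h0 (h ▸ hi)]; ring
    · simp
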